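/- Let W carry a degree assignment (d_c)_{c∈C} and a combinatorial quasi-fiber structure (g, (m_c), B) of rank r. Assume: (a) p ∤ m_c for every c ∈ C; (b) for every P ∈ B and every δ ∈ Δ_P there exists μ_δ ∈ k such that M_s(δ) = μ_δ for every s ≠ g(φ_P(δ)); (c) there exists D ∈ k with Σ_{c∈g^{-1}(s)} d_c·m_c = D in k for every s; (d) a ∈ k^r satisfies a_s ≠ 0 for every s and Σ_{s=1}^r a_s = 0; (e) for each s, the restricted combinatorics W°_s is completely p-reductive with respect to ω_a|_s. Then dim_k H¹(A*_{W,k}, ·∧ω_a) = r − 1 if μ_δ = 0 in k for every P ∈ B and every branch δ ∈ Δ_P, and dim_k H¹(A*_{W,k}, ·∧ω_a) = r − 2 otherwise. (Combinatorial form of Theorem 'p.index', main statement.) -/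

import Mathlib

/-!
At a point `P` with branches on at least two components, the classes of `ψ^δ ∧ ψ^δ'` in
`Λ² A_P / I_P` are coboundaries `e δ' - e δ`, and the only relations between them are those
detected by the contraction `ψ^δ ∧ ψ^δ' ↦ ψ^δ' - ψ^δ`. Hence `β ∧ α = 0` amounts to the resonance
condition of `(α, β)` at every branch, together with one equation at infinity for each component
whose degree is divisible by `p`.

At a `p`-transversal point, the resonance condition forces the two proportionality factors between
`β` and `α` to agree. By complete reductivity, every `β` resonant with `ω_a` is therefore
proportional to `ω_a` on each fiber, that is, `β = ω_b` for some `b`. As `∑ a = 0`, the pair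
`(ω_a, ω_b)` satisfies the resonance condition at a branch `δ` if and only if `μ_δ · ∑ b = 0`, and
the equations at infinity follow from `D · ∑ b = 0`. So `∑ b = 0` always puts `ω_b` in the kernel,
and it is forced as soon as some `μ_δ ≠ 0`. If all `μ_δ` vanish, Bezout applied to a component and
a fiber not containing it gives `D = 0`, and every `ω_b` lies in the kernel.
-/

open scoped Classical

/-- The weak combinatorial type of a plane projective curve. -/
structure WeakComb (p : ℕ) where
  /-- the set of irreducible components -/
  C : Type
  [fintypeC : Fintype C]
  [decEqC : DecidableEq C]
  [nonemptyC : Nonempty C]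
  /-- the set of singular points -/
  S : Type
  [fintypeS : Fintype S]
  [decEqS : DecidableEq S]
  /-- the local branches at each singular point -/
  Δ : S → Type
  [fintypeΔ : ∀ P, Fintype (Δ P)]
  [decEqΔ : ∀ P, DecidableEq (Δ P)]
  /-- each branch belongs to a component -/
  φ : ∀ P, Δ P → C
  /-- local intersection multiplicities of pairs of branches -/
  μ : ∀ P, Δ P → Δ P → ℕ
  μ_symm : ∀ P δ δ', φ P δ ≠ φ P δ' → μ P δ δ' = μ P δ' δ
  μ_pos : ∀ P δ δ', φ P δ ≠ φ P δ' → 0 < μ P δ δ'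

attribute [instance] WeakComb.fintypeC WeakComb.decEqC WeakComb.nonemptyC
attribute [instance] WeakComb.fintypeS WeakComb.decEqS WeakComb.fintypeΔ WeakComb.decEqΔ

namespace WeakComb

variable {p : ℕ} (W : WeakComb p)

/-- μ_P(δ,δ') with the convention that it vanishes on pairs of branches of the same component. -/
def muk (P : W.S) (δ δ' : W.Δ P) : ℕ :=
  if W.φ P δ = W.φ P δ' then 0 else W.μ P δ δ'

/-- μ_P(δ, j): the multiplicity of intersection of the branch δ with the component j. -/
def muC (P : W.S) (δ : W.Δ P) (j : W.C) : ℕ :=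
  ∑ δ' : W.Δ P, if W.φ P δ' = j then W.muk P δ δ' else 0

/-- A degree assignment: positive degrees satisfying the Bezout condition. -/
def IsDegree (d : W.C → ℕ) : Prop :=
  (∀ i, 0 < d i) ∧
  ∀ i j, i ≠ j →
    d i * d j = ∑ P : W.S, ∑ δ : W.Δ P, if W.φ P δ = i then W.muC P δ j else 0

/-- The basis vector σ_i of A¹ = (C → ZMod p). -/
noncomputable def sigma (i : W.C) : W.C → ZMod p := Pi.single i 1

/-- The basis vector ψ_P^δ of A_P = (Δ_P → ZMod p). -/
noncomputable def psi (P : W.S) (δ : W.Δ P) : W.Δ P → ZMod p := Pi.single δ 1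

/-- ψ_P^δ ∧ ψ_P^δ' as an element of Λ² A_P. -/
noncomputable def psiW (P : W.S) (δ δ' : W.Δ P) : ⋀[ZMod p]^2 (W.Δ P → ZMod p) :=
  ⟨ExteriorAlgebra.ιMulti (ZMod p) 2 ![W.psi P δ, W.psi P δ'],
   ExteriorAlgebra.ιMulti_range (ZMod p) 2 (Set.mem_range_self _)⟩

/-- The subspace I_P of Λ² A_P. -/
noncomputable def IP (P : W.S) : Submodule (ZMod p) (⋀[ZMod p]^2 (W.Δ P → ZMod p)) :=
  Submodule.span (ZMod p)
    ({x | ∃ δ1 δ2 δ3 : W.Δ P, x = W.psiW P δ1 δ2 + W.psiW P δ2 δ3 + W.psiW P δ3 δ1} ∪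
     {x | (∀ δ δ' : W.Δ P, W.φ P δ = W.φ P δ') ∧ ∃ δ1 δ2 : W.Δ P, x = W.psiW P δ1 δ2})

/-- The degree-two part A² = A^{2,0} ⊕ A^{2,∞} of the Combinatorial Aomoto algebra. -/
abbrev A2 (d : W.C → ℕ) : Type :=
  ((P : W.S) → (⋀[ZMod p]^2 (W.Δ P → ZMod p)) ⧸ W.IP P) ×
  ({i : W.C // p ∣ d i} → ZMod p)

/-- The wedge product A¹ × A¹ → A², extending σ_i ∧ σ_j bilinearly. -/
noncomputable def wedge (d : W.C → ℕ) (α β : W.C → ZMod p) : W.A2 d :=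
  (fun P => ∑ δ : W.Δ P, ∑ δ' : W.Δ P,
      (α (W.φ P δ) * β (W.φ P δ') * (W.muk P δ δ' : ZMod p)) •
        Submodule.Quotient.mk (W.psiW P δ δ'),
   fun i => α i.1 * (∑ j : W.C, (d j : ZMod p) * β j)
          - β i.1 * (∑ j : W.C, (d j : ZMod p) * α j))

/-- The linear map ·∧α : A¹ → A², β ↦ β ∧ α. -/
noncomputable def wedgeL (d : W.C → ℕ) (α : W.C → ZMod p) :
    (W.C → ZMod p) →ₗ[ZMod p] W.A2 d where
  toFun β := W.wedge d β α
  map_add' β γ := by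
    refine Prod.ext ?_ ?_
    · funext P
      simp only [wedge, Pi.add_apply, Prod.fst_add]
      rw [← Finset.sum_add_distrib]
      refine Finset.sum_congr rfl fun δ _ => ?_
      rw [← Finset.sum_add_distrib]
      refine Finset.sum_congr rfl fun δ' _ => ?_
      rw [← add_smul, add_mul, add_mul]
    · funext i
      simp only [wedge, Pi.add_apply, Prod.snd_add]
      rw [show (∑ x : W.C, (d x : ZMod p) * (β x + γ x))
            = (∑ x : W.C, (d x : ZMod p) * β x) + ∑ x : W.C, (d x : ZMod p) * γ x by
        rw [← Finset.sum_add_distrib]; exact Finset.sum_congr rfl fun x _ => by ring]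
      ring
  map_smul' c β := by
    refine Prod.ext ?_ ?_
    · funext P
      simp only [wedge, Pi.smul_apply, smul_eq_mul, RingHom.id_apply, Prod.smul_fst]
      rw [Finset.smul_sum]
      refine Finset.sum_congr rfl fun δ _ => ?_
      rw [Finset.smul_sum]
      refine Finset.sum_congr rfl fun δ' _ => ?_
      rw [smul_smul]
      ring_nf
    · funext i
      simp only [wedge, Pi.smul_apply, smul_eq_mul, RingHom.id_apply, Prod.smul_snd]
      rw [show (∑ x : W.C, (d x : ZMod p) * (c * β x)) = c * ∑ x : W.C, (d x : ZMod p) * β x by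
        rw [Finset.mul_sum]; exact Finset.sum_congr rfl fun x _ => by ring]
      ring

/-- The kernel of ·∧α : A¹ → A². -/
noncomputable def wedgeKer (d : W.C → ℕ) (α : W.C → ZMod p) :
    Submodule (ZMod p) (W.C → ZMod p) :=
  LinearMap.ker (W.wedgeL d α)

/-- H¹ of the Combinatorial Aomoto complex with differential ·∧α. -/
noncomputable abbrev H1 (d : W.C → ℕ) (α : W.C → ZMod p) :=
  (W.wedgeKer d α) ⧸
    (Submodule.comap (W.wedgeKer d α).subtype (Submodule.span (ZMod p) {α}))

end WeakComb

namespace WeakComb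

variable {p : ℕ} (W : WeakComb p)

/-- The resonance condition for (α,β) at the branch δ of the point P. -/
def ResCond (α β : W.C → ZMod p) (P : W.S) (δ : W.Δ P) : Prop :=
  β (W.φ P δ) * (∑ j : W.C, (W.muC P δ j : ZMod p) * α j)
    - α (W.φ P δ) * (∑ j : W.C, (W.muC P δ j : ZMod p) * β j) = 0

/-- P is a p-transversal point for the pair of components i ≠ j. -/
def PTransPoint (P : W.S) (i j : W.C) : Prop :=
  i ≠ j ∧ (∀ δ : W.Δ P, W.φ P δ = i ∨ W.φ P δ = j) ∧
  (∃ δ : W.Δ P, W.φ P δ = i) ∧ (∃ δ : W.Δ P, W.φ P δ = j) ∧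
  ((∃ δ : W.Δ P, W.φ P δ = i ∧ ((W.muC P δ j : ZMod p) ≠ 0)) ∨
   (∃ δ : W.Δ P, W.φ P δ = j ∧ ((W.muC P δ i : ZMod p) ≠ 0)))

/-- The components i and j are p-transversal at a point. -/
def PTransComponents (i j : W.C) : Prop := ∃ P : W.S, W.PTransPoint P i j

/-- α is non-coordinate if all its coordinates are nonzero. -/
def NonCoordinate (α : W.C → ZMod p) : Prop := ∀ i, α i ≠ 0

end WeakComb

/-- The setoid (partition) obtained from s by merging the classes of c₀ and c₁. -/
def mergeSetoid {α : Type*} (s : Setoid α) (c₀ c₁ : α) : Setoid α :=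
  Relation.EqvGen.setoid (fun a b => s.r a b ∨ (a = c₀ ∧ b = c₁))

namespace WeakComb

variable {p : ℕ} (W : WeakComb p)

/-- W is p-transversal at P with respect to (α, π), where the surjection π is encoded by the
setoid s of its fibres; the two classes π(φ_P(Δ_P)) = {i',j'} are those of c₀ and c₁. -/
def PTransversalAt (α : W.C → ZMod p) (s : Setoid W.C) (P : W.S) (c₀ c₁ : W.C) : Prop :=
  ¬ s.r c₀ c₁ ∧
  (∀ δ : W.Δ P, s.r (W.φ P δ) c₀ ∨ s.r (W.φ P δ) c₁) ∧
  (∃ δ : W.Δ P, s.r (W.φ P δ) c₀) ∧ (∃ δ : W.Δ P, s.r (W.φ P δ) c₁) ∧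
  ∃ δ : W.Δ P, s.r (W.φ P δ) c₀ ∧
    (∑ δ' : W.Δ P, if s.r (W.φ P δ') c₁
        then (W.muk P δ δ' : ZMod p) * α (W.φ P δ') else 0) ≠ 0

/-- A p-reduction step with respect to α. -/
def RedStep (α : W.C → ZMod p) (s s' : Setoid W.C) : Prop :=
  ∃ (P : W.S) (c₀ c₁ : W.C), W.PTransversalAt α s P c₀ c₁ ∧ s' = mergeSetoid s c₀ c₁

/-- W is completely p-reductive with respect to α: starting from the identity partition (⊥),
some finite sequence of p-reduction steps reaches the one-class partition (⊤). -/
def CompletelyPReductive (α : W.C → ZMod p) : Prop :=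
  Relation.ReflTransGen (W.RedStep α) ⊥ ⊤

/-- β is π-proportional to α, for the surjection π encoded by the setoid s: on each class
of s, β is a scalar multiple of α. -/
def Proportional (s : Setoid W.C) (α β : W.C → ZMod p) : Prop :=
  ∀ c : W.C, ∃ l : ZMod p, ∀ c', s.r c c' → β c' = l * α c'

end WeakComb

/-- A combinatorial quasi-fiber structure of rank r on W. -/
structure QuasiFiber {p : ℕ} (W : WeakComb p) (r : ℕ) where
  /-- which quasi-fiber each component belongs to -/
  g : W.C → Fin r
  g_surj : Function.Surjective g
  /-- multiplicities of components inside the quasi-fibers -/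
  m : W.C → ℕ
  m_pos : ∀ c, 0 < m c
  /-- the set of base points -/
  B : Set W.S
  fiber_off_base : ∀ P : W.S, P ∉ B → ∀ δ δ' : W.Δ P, g (W.φ P δ) = g (W.φ P δ')

namespace WeakComb

variable {p : ℕ} (W : WeakComb p) {r : ℕ}

/-- M_s(δ) for a branch δ at a base point P. -/
noncomputable def Mcoef (F : QuasiFiber W r) (P : W.S) (δ : W.Δ P) (s : Fin r) : ZMod p :=
  ∑ δ' : W.Δ P,
    if W.φ P δ' ≠ W.φ P δ ∧ F.g (W.φ P δ') = s
      then ((F.m (W.φ P δ') * W.μ P δ δ' : ℕ) : ZMod p) else 0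

/-- ω_a = Σ_c m_c · a_{g(c)} · σ_c ∈ A¹. -/
noncomputable def omega (F : QuasiFiber W r) (a : Fin r → ZMod p) : W.C → ZMod p :=
  fun c => (F.m c : ZMod p) * a (F.g c)

/-- The restricted combinatorics W°_s of the quasi-fiber s. -/
noncomputable def restrict (F : QuasiFiber W r) (s : Fin r) : WeakComb p where
  C := {c : W.C // F.g c = s}
  fintypeC := Fintype.ofFinite _
  decEqC := inferInstance
  nonemptyC := by obtain ⟨c, hc⟩ := F.g_surj s; exact ⟨⟨c, hc⟩⟩
  S := {P : W.S // Nonempty (W.Δ P) ∧ ∀ δ : W.Δ P, F.g (W.φ P δ) = s}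
  fintypeS := Fintype.ofFinite _
  decEqS := inferInstance
  Δ := fun P => W.Δ P.1
  fintypeΔ := fun P => inferInstance
  decEqΔ := fun P => inferInstance
  φ := fun P δ => ⟨W.φ P.1 δ, P.2.2 δ⟩
  μ := fun P δ δ' => W.μ P.1 δ δ'
  μ_symm := fun P δ δ' h => W.μ_symm P.1 δ δ' (fun e => h (Subtype.ext e))
  μ_pos := fun P δ δ' h => W.μ_pos P.1 δ δ' (fun e => h (Subtype.ext e))

/-- The restriction ω_a|_s of ω_a to the restricted combinatorics W°_s. -/
noncomputable def omegaRes (F : QuasiFiber W r) (a : Fin r → ZMod p) (s : Fin r) :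
    (W.restrict F s).C → ZMod p :=
  fun c => (F.m c.1 : ZMod p) * a s

end WeakComb

/-! ### Linear algebra -/

/-- The sum of the coordinates, as a linear functional on `ι → R`. -/
def coordSum (R ι : Type*) [CommSemiring R] [Fintype ι] : (ι → R) →ₗ[R] R :=
  ∑ i, LinearMap.proj i

lemma coordSum_apply {R ι : Type*} [CommSemiring R] [Fintype ι] (b : ι → R) :
    coordSum R ι b = ∑ i, b i := by
  simp only [coordSum, LinearMap.sum_apply, LinearMap.proj_apply]

lemma finrank_ker_coordSum (K ι : Type*) [Field K] [Fintype ι] [Nonempty ι] :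
    Module.finrank K (LinearMap.ker (coordSum K ι)) = Fintype.card ι - 1 := by
  have i₀ : ι := Classical.arbitrary ι
  have hne : coordSum K ι ≠ 0 := fun h => by
    simpa [coordSum_apply] using LinearMap.congr_fun h (Pi.single i₀ 1)
  rw [← Module.finrank_fintype_fun_eq_card (R := K),
    ← Module.Dual.finrank_ker_add_one_of_ne_zero hne, Nat.add_sub_cancel]

lemma nontrivial_of_sum_eq_zero {M ι : Type*} [AddCommMonoid M] [Fintype ι] [Nonempty ι]
    {a : ι → M} (ha : ∀ i, a i ≠ 0) (hsum : ∑ i, a i = 0) : Nontrivial ι := by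
  by_contra h
  have := not_nontrivial_iff_subsingleton.mp h
  obtain ⟨i⟩ : Nonempty ι := inferInstance
  exact ha i (by rwa [Fintype.sum_subsingleton a i] at hsum)

lemma finrank_comap_of_injective {R M N : Type*} [Ring R] [AddCommGroup M] [AddCommGroup N]
    [Module R M] [Module R N] {f : M →ₗ[R] N} (hf : Function.Injective f) {q : Submodule R N}
    (hq : q ≤ LinearMap.range f) : Module.finrank R (q.comap f) = Module.finrank R q := by
  rw [(Submodule.equivMapOfInjective f hf _).finrank_eq, Submodule.map_comap_eq_of_le hq]

lemma sum_sum_smul_sub {R M ι : Type*} [Ring R] [AddCommGroup M] [Module R M] [Fintype ι]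
    (c : ι → ι → R) (e : ι → M) :
    ∑ i, ∑ j, c i j • (e j - e i) = ∑ i, (∑ j, (c j i - c i j)) • e i := by
  simp only [smul_sub, Finset.sum_sub_distrib, sub_smul, Finset.sum_smul]
  rw [Finset.sum_comm]

/-- The contraction `Λ² M → M`, `u ∧ v ↦ ε(u) v - ε(v) u`, by a linear functional `ε`. -/
noncomputable def contractTwo {R M : Type*} [CommRing R] [AddCommGroup M] [Module R M]
    (ε : Module.Dual R M) : ⋀[R]^2 M →ₗ[R] M :=
  ExteriorAlgebra.ιInv ∘ₗ CliffordAlgebra.contractLeft ε ∘ₗ Submodule.subtype _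

lemma contractTwo_of_coe_eq {R M : Type*} [CommRing R] [AddCommGroup M] [Module R M]
    (ε : Module.Dual R M) {x : ⋀[R]^2 M} {u v : M}
    (hx : (x : ExteriorAlgebra R M) = ExteriorAlgebra.ι R u * ExteriorAlgebra.ι R v) :
    contractTwo ε x = ε u • v - ε v • u := by
  have h : CliffordAlgebra.contractLeft ε (x : ExteriorAlgebra R M)
      = ExteriorAlgebra.ι R (ε u • v - ε v • u) := by
    rw [hx, ExteriorAlgebra.ι, CliffordAlgebra.contractLeft_ι_mul, CliffordAlgebra.contractLeft_ι,
      ← Algebra.commutes, ← Algebra.smul_def, map_sub, map_smul, map_smul]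
  exact (congrArg ExteriorAlgebra.ιInv h).trans (ExteriorAlgebra.ι_leftInverse _)

lemma mergeSetoid_le_iff {α : Type*} {s t : Setoid α} {x y : α} :
    mergeSetoid s x y ≤ t ↔ s ≤ t ∧ t x y := by
  refine ⟨fun h => ⟨fun u v huv => h (.rel _ _ (.inl huv)), h (.rel _ _ (.inr ⟨rfl, rfl⟩))⟩,
    fun h => Setoid.eqvGen_le ?_⟩
  rintro u v (huv | ⟨rfl, rfl⟩)
  exacts [h.1 huv, h.2]

namespace WeakComb

variable {p : ℕ} (W : WeakComb p)

/-! ### Relations in degree two -/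

lemma coe_psiW (P : W.S) (δ δ' : W.Δ P) :
    (W.psiW P δ δ' : ExteriorAlgebra (ZMod p) (W.Δ P → ZMod p))
      = ExteriorAlgebra.ι (ZMod p) (W.psi P δ) * ExteriorAlgebra.ι (ZMod p) (W.psi P δ') := by
  simp [psiW, ExteriorAlgebra.ιMulti_apply]

lemma psiW_swap (P : W.S) (δ δ' : W.Δ P) : W.psiW P δ' δ = -W.psiW P δ δ' := by
  refine eq_neg_of_add_eq_zero_left (Subtype.ext ?_)
  simp only [Submodule.coe_add, coe_psiW, ExteriorAlgebra.ι_add_mul_swap, Submodule.coe_zero]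

lemma mk_psiW_eq_sub (P : W.S) (δ₀ δ δ' : W.Δ P) :
    (W.IP P).mkQ (W.psiW P δ δ')
      = (W.IP P).mkQ (W.psiW P δ₀ δ') - (W.IP P).mkQ (W.psiW P δ₀ δ) := by
  have hcyc : W.psiW P δ₀ δ + W.psiW P δ δ' + W.psiW P δ' δ₀ ∈ W.IP P :=
    Submodule.subset_span (.inl ⟨δ₀, δ, δ', rfl⟩)
  rw [← map_sub, ← sub_eq_zero, ← map_sub, Submodule.mkQ_apply, Submodule.Quotient.mk_eq_zero]
  convert hcyc using 1
  rw [W.psiW_swap P δ₀ δ']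
  abel

lemma contractTwo_psiW (P : W.S) (δ δ' : W.Δ P) :
    contractTwo (coordSum (ZMod p) (W.Δ P)) (W.psiW P δ δ') = W.psi P δ' - W.psi P δ := by
  rw [contractTwo_of_coe_eq _ (W.coe_psiW P δ δ')]
  simp [coordSum_apply, psi]

lemma IP_le_ker_contractTwo {P : W.S} (hP : ¬ ∀ δ δ' : W.Δ P, W.φ P δ = W.φ P δ') :
    W.IP P ≤ LinearMap.ker (contractTwo (coordSum (ZMod p) (W.Δ P))) := by
  rw [IP, Submodule.span_le]
  rintro x (⟨δ₁, δ₂, δ₃, rfl⟩ | ⟨h, -⟩)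
  · simp [contractTwo_psiW]
  · exact absurd h hP

lemma sum_smul_mk_psiW_eq_zero_iff {P : W.S} (hP : ¬ ∀ δ δ' : W.Δ P, W.φ P δ = W.φ P δ')
    (c : W.Δ P → W.Δ P → ZMod p) :
    ∑ δ, ∑ δ', c δ δ' • (W.IP P).mkQ (W.psiW P δ δ') = 0 ↔ ∀ δ, ∑ δ', (c δ' δ - c δ δ') = 0 := by
  constructor
  · intro h
    have hcontract := congrArg ((W.IP P).liftQ _ (W.IP_le_ker_contractTwo hP)) h
    simp only [map_sum, map_smul, Submodule.mkQ_apply, Submodule.liftQ_apply, map_zero,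
      contractTwo_psiW, sum_sum_smul_sub] at hcontract
    intro δ
    simpa [psi, Finset.sum_apply, Pi.single_apply] using congrFun hcontract δ
  · intro h
    obtain ⟨δ₀, -⟩ := not_forall.mp hP
    calc ∑ δ, ∑ δ', c δ δ' • (W.IP P).mkQ (W.psiW P δ δ')
        = ∑ δ, ∑ δ', c δ δ' •
            ((W.IP P).mkQ (W.psiW P δ₀ δ') - (W.IP P).mkQ (W.psiW P δ₀ δ)) :=
          Finset.sum_congr rfl fun δ _ => Finset.sum_congr rfl fun δ' _ =>
            congrArg (c δ δ' • ·) (W.mk_psiW_eq_sub P δ₀ δ δ')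
      _ = ∑ δ, (∑ δ', (c δ' δ - c δ δ')) • (W.IP P).mkQ (W.psiW P δ₀ δ) :=
          sum_sum_smul_sub c fun δ => (W.IP P).mkQ (W.psiW P δ₀ δ)
      _ = 0 := Finset.sum_eq_zero fun δ _ => by rw [h δ, zero_smul]

/-! ### The kernel of the wedge map -/

/-- The intersection multiplicity mod `p` of the branch `δ` with the divisor `∑ α_j C_j`; the
component carrying `δ` contributes nothing. -/
def branchInter (P : W.S) (δ : W.Δ P) (α : W.C → ZMod p) : ZMod p :=
  ∑ j, (W.muC P δ j : ZMod p) * α j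

lemma branchInter_eq_sum_muk (P : W.S) (δ : W.Δ P) (α : W.C → ZMod p) :
    W.branchInter P δ α = ∑ δ', (W.muk P δ δ' : ZMod p) * α (W.φ P δ') := by
  simp only [branchInter, muC, Nat.cast_sum, Nat.cast_ite, Nat.cast_zero, Finset.sum_mul, ite_mul,
    zero_mul]
  rw [Finset.sum_comm]
  simp only [Finset.sum_ite_eq, Finset.mem_univ, if_true]

lemma resCond_iff_sum_muk (α β : W.C → ZMod p) (P : W.S) (δ : W.Δ P) :
    W.ResCond α β P δ ↔ ∑ δ', (W.muk P δ δ' : ZMod p) *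
      (β (W.φ P δ) * α (W.φ P δ') - α (W.φ P δ) * β (W.φ P δ')) = 0 := by
  change β _ * W.branchInter P δ α - α _ * W.branchInter P δ β = 0 ↔ _
  rw [branchInter_eq_sum_muk, branchInter_eq_sum_muk, Finset.mul_sum, Finset.mul_sum,
    ← Finset.sum_sub_distrib]
  exact Eq.congr_left (Finset.sum_congr rfl fun δ' _ => by ring)

lemma muk_comm (P : W.S) (δ δ' : W.Δ P) : W.muk P δ δ' = W.muk P δ' δ := by
  unfold muk
  split_ifs with h h' h'
  exacts [rfl, absurd h.symm h', absurd h'.symm h, W.μ_symm P δ δ' h]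

lemma wedge_fst_eq_zero_iff (d : W.C → ℕ) (α β : W.C → ZMod p) (P : W.S) :
    (W.wedge d β α).1 P = 0 ↔ ∀ δ, W.ResCond α β P δ := by
  simp only [resCond_iff_sum_muk]
  by_cases hP : ∀ δ δ' : W.Δ P, W.φ P δ = W.φ P δ'
  · have hmuk : ∀ δ δ', W.muk P δ δ' = 0 := fun δ δ' => if_pos (hP δ δ')
    simp [wedge, hmuk]
  · refine (W.sum_smul_mk_psiW_eq_zero_iff hP _).trans (forall_congr' fun δ => ?_)
    rw [← neg_eq_zero, ← Finset.sum_neg_distrib]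
    refine Eq.congr_left (Finset.sum_congr rfl fun δ' _ => ?_)
    rw [W.muk_comm P δ' δ]
    ring

lemma mem_wedgeKer_iff (d : W.C → ℕ) (α β : W.C → ZMod p) :
    β ∈ W.wedgeKer d α ↔ (∀ P δ, W.ResCond α β P δ) ∧
      ∀ i, p ∣ d i → β i * (∑ j, (d j : ZMod p) * α j) - α i * (∑ j, (d j : ZMod p) * β j) = 0 := by
  rw [wedgeKer, LinearMap.mem_ker]
  change W.wedge d β α = 0 ↔ _
  rw [Prod.ext_iff, funext_iff, funext_iff]
  exact and_congr (forall_congr' fun P => W.wedge_fst_eq_zero_iff d α β P) Subtype.forall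

lemma self_mem_wedgeKer (d : W.C → ℕ) (α : W.C → ZMod p) : α ∈ W.wedgeKer d α :=
  (W.mem_wedgeKer_iff d α α).mpr ⟨fun _ _ => sub_self _, fun _ _ => sub_self _⟩

lemma finrank_H1 [Fact p.Prime] (d : W.C → ℕ) {α : W.C → ZMod p} (hα : α ≠ 0) :
    Module.finrank (ZMod p) (W.H1 d α) = Module.finrank (ZMod p) (W.wedgeKer d α) - 1 := by
  have hle : Submodule.span (ZMod p) {α} ≤ W.wedgeKer d α := by
    simpa using W.self_mem_wedgeKer d α
  rw [Submodule.finrank_quotient, (Submodule.comapSubtypeEquivOfLe hle).finrank_eq,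
    finrank_span_singleton hα]

/-! ### Reduction steps -/

variable {W}

lemma proportional_iff_le_ker [Fact p.Prime] {s : Setoid W.C} {α β : W.C → ZMod p}
    (hα : W.NonCoordinate α) :
    W.Proportional s α β ↔ s ≤ Setoid.ker fun c => β c / α c := by
  constructor
  · intro h c c' hcc'
    obtain ⟨l, hl⟩ := h c
    change β c / α c = β c' / α c'
    rw [hl c (s.refl c), hl c' hcc', mul_div_cancel_right₀ _ (hα c),
      mul_div_cancel_right₀ _ (hα c')]
  · intro h c
    exact ⟨β c / α c, fun c' hcc' => (div_eq_iff (hα c')).mp (h hcc').symm⟩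

lemma PTransversalAt.eq_of_resCond [Fact p.Prime] {s : Setoid W.C} {α β : W.C → ZMod p}
    {P : W.S} {c₀ c₁ : W.C} {l₀ l₁ : ZMod p} (hP : W.PTransversalAt α s P c₀ c₁)
    (hα : W.NonCoordinate α) (hres : ∀ δ, W.ResCond α β P δ)
    (h₀ : ∀ c, s c c₀ → β c = l₀ * α c) (h₁ : ∀ c, s c c₁ → β c = l₁ * α c) : l₀ = l₁ := by
  obtain ⟨-, hbranch, -, -, δ, hδ, hne⟩ := hP
  have hsum : α (W.φ P δ) * (l₀ - l₁) * (∑ δ' : W.Δ P, if s.r (W.φ P δ') c₁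
      then (W.muk P δ δ' : ZMod p) * α (W.φ P δ') else 0) = 0 := by
    refine Eq.trans ?_ ((W.resCond_iff_sum_muk α β P δ).mp (hres δ))
    rw [Finset.mul_sum]
    refine Finset.sum_congr rfl fun δ' _ => ?_
    rw [h₀ _ hδ]
    split_ifs with h
    · rw [h₁ _ h]
      ring
    · rw [h₀ _ ((hbranch δ').resolve_right h)]
      ring
  have hdiff : α (W.φ P δ) * (l₀ - l₁) = 0 := (mul_eq_zero.mp hsum).resolve_right hne
  exact sub_eq_zero.mp ((mul_eq_zero.mp hdiff).resolve_left (hα _))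

lemma Proportional.of_redStep [Fact p.Prime] {s s' : Setoid W.C} {α β : W.C → ZMod p}
    (h : W.Proportional s α β) (hα : W.NonCoordinate α) (hres : ∀ P δ, W.ResCond α β P δ)
    (hstep : W.RedStep α s s') : W.Proportional s' α β := by
  rw [proportional_iff_le_ker hα] at h ⊢
  obtain ⟨P, c₀, c₁, hP, rfl⟩ := hstep
  refine mergeSetoid_le_iff.mpr ⟨h, ?_⟩
  exact hP.eq_of_resCond hα (hres P)
    (fun c hc => (div_eq_iff (hα c)).mp (h hc)) (fun c hc => (div_eq_iff (hα c)).mp (h hc))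

lemma CompletelyPReductive.proportional_top [Fact p.Prime] {α β : W.C → ZMod p}
    (hred : W.CompletelyPReductive α) (hα : W.NonCoordinate α)
    (hres : ∀ P δ, W.ResCond α β P δ) : W.Proportional ⊤ α β := by
  have hbot : W.Proportional ⊥ α β := (proportional_iff_le_ker hα).mpr bot_le
  have hle : ∀ s, Relation.ReflTransGen (W.RedStep α) ⊥ s → W.Proportional s α β :=
    fun s hs => hs.rec hbot fun _ hstep ih => ih.of_redStep hα hres hstep
  exact hle ⊤ hred

/-! ### Bezout -/

lemma IsDegree.sum_branchInter {d : W.C → ℕ} (hd : W.IsDegree d) {i : W.C} {α : W.C → ZMod p}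
    (hα : α i = 0) :
    (∑ P, ∑ δ, if W.φ P δ = i then W.branchInter P δ α else 0)
      = (d i : ZMod p) * ∑ j, (d j : ZMod p) * α j := by
  have hbezout : ∀ j, (d i : ZMod p) * (d j * α j)
      = ∑ P, ∑ δ, if W.φ P δ = i then (W.muC P δ j : ZMod p) * α j else 0 := by
    intro j
    by_cases hij : i = j
    · simp [← hij, hα]
    · rw [← mul_assoc, ← Nat.cast_mul, hd.2 i j hij]
      simp only [Nat.cast_sum, Nat.cast_ite, Nat.cast_zero, Finset.sum_mul, ite_mul, zero_mul]
  simp only [Finset.mul_sum, hbezout, branchInter]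
  rw [Finset.sum_comm]
  refine Finset.sum_congr rfl fun P _ => ?_
  rw [Finset.sum_comm]
  refine Finset.sum_congr rfl fun δ _ => ?_
  split_ifs
  exacts [rfl, Finset.sum_const_zero.symm]

end WeakComb

namespace QuasiFiber

open WeakComb

variable {p r : ℕ} {W : WeakComb p} (F : QuasiFiber W r)

/-! ### Forms of a quasi-fiber structure -/

lemma nonCoordinate_omega [Fact p.Prime] {a : Fin r → ZMod p} (hm : ∀ c, ¬ p ∣ F.m c)
    (ha : ∀ s, a s ≠ 0) : W.NonCoordinate (W.omega F a) := fun c =>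
  mul_ne_zero (mt (ZMod.natCast_eq_zero_iff _ _).mp (hm c)) (ha _)

/-- The linear parametrisation `b ↦ ω_b` of the space `R_φ`. -/
noncomputable def omegaL : (Fin r → ZMod p) →ₗ[ZMod p] (W.C → ZMod p) where
  toFun b := W.omega F b
  map_add' _ _ := funext fun _ => mul_add _ _ _
  map_smul' _ _ := funext fun _ => mul_left_comm _ _ _

variable {F}

lemma omegaL_injective [Fact p.Prime] {a : Fin r → ZMod p}
    (hω : W.NonCoordinate (W.omega F a)) : Function.Injective F.omegaL := by
  intro b b' h
  funext s
  obtain ⟨c, rfl⟩ := F.g_surj s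
  exact mul_left_cancel₀ (left_ne_zero_of_mul (hω c)) (congrFun h c)

lemma omegaRes_eq (a : Fin r → ZMod p) (s : Fin r) :
    W.omegaRes F a s = fun c => W.omega F a c.1 := by
  funext c
  rw [omega, c.2, omegaRes]

lemma resCond_restrict {α β : W.C → ZMod p} {s : Fin r} {P : (W.restrict F s).S}
    {δ : W.Δ P.1} (h : W.ResCond α β P.1 δ) :
    (W.restrict F s).ResCond (fun c => α c.1) (fun c => β c.1) P δ := by
  have hmuk : ∀ δ', (W.restrict F s).muk P δ δ' = W.muk P.1 δ δ' := fun δ' => by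
    simp [muk, restrict, Subtype.ext_iff]
  refine ((W.restrict F s).resCond_iff_sum_muk _ _ P δ).mpr (Eq.trans ?_
    ((W.resCond_iff_sum_muk α β P.1 δ).mp h))
  exact Finset.sum_congr rfl fun δ' _ => congrArg (fun n : ℕ => (n : ZMod p) * _) (hmuk δ')

lemma wedgeKer_le_range_omegaL [Fact p.Prime] {d : W.C → ℕ} {a : Fin r → ZMod p}
    (hω : W.NonCoordinate (W.omega F a))
    (hred : ∀ s, (W.restrict F s).CompletelyPReductive (W.omegaRes F a s)) :
    W.wedgeKer d (W.omega F a) ≤ LinearMap.range F.omegaL := by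
  intro β hβ
  have hres := ((W.mem_wedgeKer_iff d _ β).mp hβ).1
  have hfiber : ∀ s, ∃ l : ZMod p, ∀ c, F.g c = s → β c = l * W.omega F a c := by
    intro s
    have hred := hred s
    rw [omegaRes_eq] at hred
    obtain ⟨c₀, hc₀⟩ := F.g_surj s
    obtain ⟨l, hl⟩ := hred.proportional_top (β := fun c : {c // F.g c = s} => β c.1)
      (fun c => hω c.1) (fun P δ => resCond_restrict (hres P.1 δ)) ⟨c₀, hc₀⟩
    exact ⟨l, fun c hc => hl ⟨c, hc⟩ trivial⟩
  choose l hl using hfiber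
  refine ⟨fun s => l s * a s, funext fun c => ?_⟩
  exact (mul_left_comm _ _ _).trans (hl _ c rfl).symm

/-! ### Resonance between the forms `ω_a` and `ω_b` -/

lemma branchInter_omega (P : W.S) (δ : W.Δ P) (b : Fin r → ZMod p) :
    W.branchInter P δ (W.omega F b) = ∑ s, W.Mcoef F P δ s * b s := by
  simp only [branchInter_eq_sum_muk, Mcoef, Finset.sum_mul]
  rw [Finset.sum_comm]
  refine Finset.sum_congr rfl fun δ' _ => ?_
  by_cases h : W.φ P δ = W.φ P δ'
  · simp [muk, h]
  · simp [muk, h, Ne.symm h, omega]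
    ring

lemma Mcoef_eq_zero_of_notMem {P : W.S} (hP : P ∉ F.B) (δ : W.Δ P) {s : Fin r}
    (hs : s ≠ F.g (W.φ P δ)) : W.Mcoef F P δ s = 0 :=
  Finset.sum_eq_zero fun δ' _ =>
    if_neg fun h => hs (h.2.symm.trans (F.fiber_off_base P hP δ' δ))

variable (F) in
/-- `u` is the family of the common values `μ_δ` of the `M_s(δ)`, `s ≠ g(φ_P(δ))`, extended from
the base points to all points of `W`. -/
def IsBranchMult (u : ∀ P, W.Δ P → ZMod p) : Prop :=
  ∀ P δ s, s ≠ F.g (W.φ P δ) → W.Mcoef F P δ s = u P δ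

variable (F) in
/-- Every quasi-fiber has degree `D` mod `p`, counting components with their multiplicities. -/
def HasFiberDegree (d : W.C → ℕ) (D : ZMod p) : Prop :=
  ∀ s, (∑ c, if F.g c = s then ((d c * F.m c : ℕ) : ZMod p) else 0) = D

lemma isBranchMult_zero_of_base
    (h : ∀ P ∈ F.B, ∀ δ s, s ≠ F.g (W.φ P δ) → W.Mcoef F P δ s = 0) :
    F.IsBranchMult fun _ _ => 0 := fun P δ s hs => by
  by_cases hP : P ∈ F.B
  exacts [h P hP δ s hs, Mcoef_eq_zero_of_notMem hP δ hs]

lemma exists_isBranchMult_of_base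
    (h : ∀ P ∈ F.B, ∀ δ : W.Δ P, ∃ μδ, ∀ s, s ≠ F.g (W.φ P δ) → W.Mcoef F P δ s = μδ) :
    ∃ u, F.IsBranchMult u := by
  have hall : ∀ P, ∀ δ : W.Δ P, ∃ μδ, ∀ s, s ≠ F.g (W.φ P δ) → W.Mcoef F P δ s = μδ := by
    intro P δ
    by_cases hP : P ∈ F.B
    exacts [h P hP δ, ⟨0, fun s hs => Mcoef_eq_zero_of_notMem hP δ hs⟩]
  choose u hu using hall
  exact ⟨u, hu⟩

lemma IsBranchMult.branchInter_omega {u : ∀ P, W.Δ P → ZMod p} (hu : F.IsBranchMult u)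
    (P : W.S) (δ : W.Δ P) (b : Fin r → ZMod p) :
    W.branchInter P δ (W.omega F b) = u P δ * ∑ s, b s
      + (W.Mcoef F P δ (F.g (W.φ P δ)) - u P δ) * b (F.g (W.φ P δ)) := by
  have hother : ∀ s, s ≠ F.g (W.φ P δ) → W.Mcoef F P δ s * b s - u P δ * b s = 0 :=
    fun s hs => by rw [hu P δ s hs, sub_self]
  rw [QuasiFiber.branchInter_omega, ← sub_eq_iff_eq_add', Finset.mul_sum,
    ← Finset.sum_sub_distrib, Fintype.sum_eq_single _ hother, sub_mul]

lemma IsBranchMult.resCond_omega_iff [Fact p.Prime] {u : ∀ P, W.Δ P → ZMod p}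
    (hu : F.IsBranchMult u) {a : Fin r → ZMod p} (hω : W.NonCoordinate (W.omega F a))
    (hsum : ∑ s, a s = 0) (b : Fin r → ZMod p) (P : W.S) (δ : W.Δ P) :
    W.ResCond (W.omega F a) (W.omega F b) P δ ↔ u P δ * ∑ s, b s = 0 := by
  have hres : W.omega F b (W.φ P δ) * W.branchInter P δ (W.omega F a)
      - W.omega F a (W.φ P δ) * W.branchInter P δ (W.omega F b)
      = -W.omega F a (W.φ P δ) * (u P δ * ∑ s, b s) := by
    rw [hu.branchInter_omega, hu.branchInter_omega, hsum, omega, omega]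
    ring
  exact (Eq.congr_left hres).trans (mul_eq_zero_iff_left (neg_ne_zero.mpr (hω _)))

lemma HasFiberDegree.sum_mul_omega {d : W.C → ℕ} {D : ZMod p} (hD : F.HasFiberDegree d D)
    (b : Fin r → ZMod p) : ∑ j, (d j : ZMod p) * W.omega F b j = D * ∑ s, b s := by
  calc ∑ j, (d j : ZMod p) * W.omega F b j
      = ∑ j, ∑ s, (if F.g j = s then ((d j * F.m j : ℕ) : ZMod p) else 0) * b s := by
        simp [omega, mul_assoc]
    _ = ∑ s, D * b s := by
        rw [Finset.sum_comm]
        exact Finset.sum_congr rfl fun s _ => by rw [← Finset.sum_mul, hD s]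
    _ = D * ∑ s, b s := (Finset.mul_sum _ _ _).symm

lemma omega_mem_wedgeKer_iff [Fact p.Prime] {d : W.C → ℕ} {D : ZMod p}
    {u : ∀ P, W.Δ P → ZMod p} {a : Fin r → ZMod p} (hD : F.HasFiberDegree d D)
    (hu : F.IsBranchMult u) (hω : W.NonCoordinate (W.omega F a)) (hsum : ∑ s, a s = 0)
    (b : Fin r → ZMod p) :
    W.omega F b ∈ W.wedgeKer d (W.omega F a) ↔
      (∀ P δ, u P δ * ∑ s, b s = 0) ∧ ∀ i, p ∣ d i → D * ∑ s, b s = 0 := by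
  rw [mem_wedgeKer_iff, hD.sum_mul_omega, hD.sum_mul_omega, hsum, mul_zero]
  refine and_congr (forall₂_congr (hu.resCond_omega_iff hω hsum b))
    (forall₂_congr fun i _ => ?_)
  rw [mul_zero, zero_sub, neg_eq_zero, mul_eq_zero_iff_left (hω i)]

lemma HasFiberDegree.deg_mul_eq_zero {d : W.C → ℕ} {D : ZMod p} (hD : F.HasFiberDegree d D)
    (hd : W.IsDegree d) (hu : F.IsBranchMult fun _ _ => 0) {i : W.C} {s : Fin r}
    (hs : s ≠ F.g i) : (d i : ZMod p) * D = 0 := by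
  have hi : W.omega F (Pi.single s 1) i = 0 := by simp [omega, hs.symm]
  have hinter : ∀ P δ, W.φ P δ = i → W.branchInter P δ (W.omega F (Pi.single s 1)) = 0 := by
    rintro P δ rfl
    simp [hu.branchInter_omega, hs.symm]
  calc (d i : ZMod p) * D
      = d i * ∑ j, (d j : ZMod p) * W.omega F (Pi.single s 1) j := by
        rw [hD.sum_mul_omega, Finset.sum_pi_single', if_pos (Finset.mem_univ s), mul_one]
    _ = ∑ P, ∑ δ, if W.φ P δ = i then W.branchInter P δ (W.omega F (Pi.single s 1)) else 0 :=
        (hd.sum_branchInter hi).symm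
    _ = 0 := Finset.sum_eq_zero fun P _ => Finset.sum_eq_zero fun δ _ =>
        ite_eq_right_iff.mpr (hinter P δ)

lemma HasFiberDegree.eq_zero [Fact p.Prime] [Nontrivial (Fin r)] {d : W.C → ℕ} {D : ZMod p}
    (hD : F.HasFiberDegree d D) (hd : W.IsDegree d) (hu : F.IsBranchMult fun _ _ => 0) :
    D = 0 := by
  by_cases hdeg : ∀ i, (d i : ZMod p) = 0
  · obtain ⟨s⟩ : Nonempty (Fin r) := inferInstance
    rw [← hD s]
    exact Finset.sum_eq_zero fun c _ => by simp [hdeg c]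
  · obtain ⟨i, hi⟩ := not_forall.mp hdeg
    obtain ⟨s, hs⟩ := exists_ne (F.g i)
    exact (mul_eq_zero.mp (hD.deg_mul_eq_zero hd hu hs)).resolve_left hi

/-! ### Dimension of the first cohomology -/

lemma finrank_H1_omega [Fact p.Prime] {d : W.C → ℕ} {a : Fin r → ZMod p}
    (hω : W.NonCoordinate (W.omega F a))
    (hred : ∀ s, (W.restrict F s).CompletelyPReductive (W.omegaRes F a s)) :
    Module.finrank (ZMod p) (W.H1 d (W.omega F a))
      = Module.finrank (ZMod p) ((W.wedgeKer d (W.omega F a)).comap F.omegaL) - 1 := by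
  have hne : W.omega F a ≠ 0 := fun h => hω (Classical.arbitrary W.C) (congrFun h _)
  rw [W.finrank_H1 d hne,
    finrank_comap_of_injective (omegaL_injective hω) (wedgeKer_le_range_omegaL hω hred)]

lemma comap_omegaL_wedgeKer_eq_top [Fact p.Prime] [Nontrivial (Fin r)] {d : W.C → ℕ}
    {D : ZMod p} {a : Fin r → ZMod p} (hd : W.IsDegree d) (hD : F.HasFiberDegree d D)
    (hu : F.IsBranchMult fun _ _ => 0) (hω : W.NonCoordinate (W.omega F a))
    (hsum : ∑ s, a s = 0) : (W.wedgeKer d (W.omega F a)).comap F.omegaL = ⊤ := by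
  refine eq_top_iff.mpr fun b _ => (omega_mem_wedgeKer_iff hD hu hω hsum b).mpr ?_
  simp [hD.eq_zero hd hu]

lemma comap_omegaL_wedgeKer_eq_ker_coordSum [Fact p.Prime] {d : W.C → ℕ} {D : ZMod p}
    {u : ∀ P, W.Δ P → ZMod p} {a : Fin r → ZMod p} (hD : F.HasFiberDegree d D)
    (hu : F.IsBranchMult u) (hu₀ : ∃ P δ, u P δ ≠ 0) (hω : W.NonCoordinate (W.omega F a))
    (hsum : ∑ s, a s = 0) :
    (W.wedgeKer d (W.omega F a)).comap F.omegaL = LinearMap.ker (coordSum (ZMod p) (Fin r)) := by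
  obtain ⟨P, δ, hPδ⟩ := hu₀
  ext b
  rw [LinearMap.mem_ker, coordSum_apply]
  refine (omega_mem_wedgeKer_iff hD hu hω hsum b).trans ⟨fun h => ?_, fun h => by simp [h]⟩
  exact (mul_eq_zero.mp (h.1 P δ)).resolve_left hPδ

end QuasiFiber

section Statements

open WeakComb

variable {p : ℕ} [Fact p.Prime]

/-- Theorem `p.index`, main statement. -/
theorem stmt13 (W : WeakComb p) (d : W.C → ℕ) (hd : W.IsDegree d)
    {r : ℕ} (F : QuasiFiber W r)
    (hm : ∀ c : W.C, ¬ p ∣ F.m c)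
    (hM : ∀ P ∈ F.B, ∀ δ : W.Δ P, ∃ μδ : ZMod p,
      ∀ s : Fin r, s ≠ F.g (W.φ P δ) → W.Mcoef F P δ s = μδ)
    (hD : ∃ D : ZMod p, ∀ s : Fin r,
      (∑ c : W.C, if F.g c = s then ((d c * F.m c : ℕ) : ZMod p) else 0) = D)
    (a : Fin r → ZMod p) (ha : ∀ s, a s ≠ 0) (hsum : (∑ s, a s) = 0)
    (hred : ∀ s : Fin r,
      (W.restrict F s).CompletelyPReductive (W.omegaRes F a s)) :
    ((∀ P ∈ F.B, ∀ δ : W.Δ P, ∀ s : Fin r,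
        s ≠ F.g (W.φ P δ) → W.Mcoef F P δ s = 0) →
      Module.finrank (ZMod p) (W.H1 d (W.omega F a)) = r - 1) ∧
    (¬ (∀ P ∈ F.B, ∀ δ : W.Δ P, ∀ s : Fin r,
        s ≠ F.g (W.φ P δ) → W.Mcoef F P δ s = 0) →
      Module.finrank (ZMod p) (W.H1 d (W.omega F a)) = r - 2) := by
  obtain ⟨D, hD⟩ : ∃ D, F.HasFiberDegree d D := hD
  have hω := F.nonCoordinate_omega hm ha
  have : Nonempty (Fin r) := ⟨F.g (Classical.arbitrary W.C)⟩
  have : Nontrivial (Fin r) := nontrivial_of_sum_eq_zero ha hsum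
  rw [QuasiFiber.finrank_H1_omega hω hred]
  constructor
  · intro h
    rw [QuasiFiber.comap_omegaL_wedgeKer_eq_top hd hD (QuasiFiber.isBranchMult_zero_of_base h) hω
      hsum, finrank_top, Module.finrank_fin_fun]
  · intro h
    obtain ⟨u, hu⟩ := QuasiFiber.exists_isBranchMult_of_base hM
    have hu₀ : ∃ P δ, u P δ ≠ 0 := by
      by_contra! hzero
      exact h fun P _ δ s hs => (hu P δ s hs).trans (hzero P δ)
    rw [QuasiFiber.comap_omegaL_wedgeKer_eq_ker_coordSum hD hu hu₀ hω hsum, finrank_ker_coordSum,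
      Fintype.card_fin, Nat.sub_sub]

end Statements
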